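/- (Knowledge extraction for the Cramer–Damgård–Schoenmakers protocol.) Let G be a finite group of prime order p, let g ∈ G, let k ≥ 1, and let a, α : Fin k → G. Let β, β' ∈ ZMod p with β ≠ β', and let β_i, γ_i, β'_i, γ'_i ∈ ZMod p (for i ∈ Fin k) satisfy Σ_i β_i = β, Σ_i β'_i = β', and, for every i, g^(γ_i) = α_i·(a_i)^(β_i) and g^(γ'_i) = α_i·(a_i)^(β'_i). Then there exists i with β_i ≠ β'_i such that a_i = g^((γ_i − γ'_i)·(β_i − β'_i)⁻¹). -/

import Mathlib

/-!
Elements `u` with `u ^ p = 1` have well-defined powers with exponents in `ZMod p`. Dividing the two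
verification equations at the index `i` cancels the common first message `α i` and leaves
`g ^ (γ i - γ' i) = a i ^ (β i - β' i)`. The challenges differ at some `i` because their sums do,
and there `β i - β' i` is invertible modulo `p`, so the equation can be solved for `a i`.
-/

section ZModPow

variable {M : Type*} [Monoid M] {n : ℕ} {u v : M}

theorem pow_zmod_val_add [NeZero n] (hu : u ^ n = 1) (x y : ZMod n) :
    u ^ (x + y).val = u ^ x.val * u ^ y.val := by
  rw [ZMod.val_add, ← pow_eq_pow_mod _ hu, pow_add]

theorem pow_zmod_val_mul (hu : u ^ n = 1) (x y : ZMod n) :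
    u ^ (x * y).val = (u ^ x.val) ^ y.val := by
  rw [ZMod.val_mul, ← pow_eq_pow_mod _ hu, pow_mul]

theorem pow_zmod_val_one (hu : u ^ n = 1) : u ^ (1 : ZMod n).val = u := by
  rw [ZMod.val_one_eq_one_mod, ← pow_eq_pow_mod _ hu, pow_one]

theorem eq_pow_zmod_val_mul_inv (hu : u ^ n = 1) (hv : v ^ n = 1) {x y : ZMod n}
    (hx : IsUnit x) (h : v ^ y.val = u ^ x.val) : u = v ^ (y * x⁻¹).val :=
  calc
    u = u ^ (x * x⁻¹).val := by rw [ZMod.mul_inv_of_unit x hx, pow_zmod_val_one hu]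
    _ = (v ^ y.val) ^ x⁻¹.val := by rw [pow_zmod_val_mul hu, h]
    _ = v ^ (y * x⁻¹).val := (pow_zmod_val_mul hv y x⁻¹).symm

theorem pow_zmod_val_sub_eq_pow_zmod_val_sub [NeZero n] (hu : u ^ n = 1) (hv : v ^ n = 1) {w : M}
    {x x' y y' : ZMod n} (h : v ^ y.val = w * u ^ x.val) (h' : v ^ y'.val = w * u ^ x'.val) :
    v ^ (y - y').val = u ^ (x - x').val := by
  have hv_unit : IsUnit (v ^ y'.val) := (IsUnit.of_pow_eq_one hv (NeZero.ne n)).pow _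
  refine hv_unit.mul_left_cancel ?_
  calc
    v ^ y'.val * v ^ (y - y').val = v ^ y.val := by
      rw [← pow_zmod_val_add hv, add_sub_cancel]
    _ = w * (u ^ x'.val * u ^ (x - x').val) := by
      rw [h, ← pow_zmod_val_add hu, add_sub_cancel]
    _ = v ^ y'.val * u ^ (x - x').val := by rw [h', mul_assoc]

end ZModPow

theorem cds_knowledge_extraction_general {M ι : Type*} [Monoid M] [Fintype ι] {p : ℕ}
    [Fact p.Prime] {g : M} (hg : g ^ p = 1) {a α : ι → M} (ha : ∀ i, a i ^ p = 1)
    {β γ β' γ' : ι → ZMod p} (hβ : ∑ i, β i ≠ ∑ i, β' i)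
    (h : ∀ i, g ^ (γ i).val = α i * a i ^ (β i).val)
    (h' : ∀ i, g ^ (γ' i).val = α i * a i ^ (β' i).val) :
    ∃ i, β i ≠ β' i ∧ a i = g ^ ((γ i - γ' i) * (β i - β' i)⁻¹).val := by
  obtain ⟨i, hi⟩ : ∃ i, β i ≠ β' i :=
    Function.ne_iff.mp (ne_of_apply_ne (fun b => ∑ i, b i) hβ)
  have hunit : IsUnit (β i - β' i) := (sub_ne_zero.mpr hi).isUnit
  have hpow : g ^ (γ i - γ' i).val = a i ^ (β i - β' i).val :=
    pow_zmod_val_sub_eq_pow_zmod_val_sub (ha i) hg (h i) (h' i)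
  exact ⟨i, hi, eq_pow_zmod_val_mul_inv (ha i) hg hunit hpow⟩

/-- Knowledge extraction for the Cramer–Damgård–Schoenmakers protocol: from two
accepting transcripts with the same first message `α` and distinct master challenges
`β ≠ β'`, there exists an index `i` with `βi i ≠ βi' i`, and for this index the
discrete logarithm of `a i` base `g` can be computed:
`a i = g ^ ((γi i - γi' i) * (βi i - βi' i)⁻¹).val`. -/
theorem cds_knowledge_extraction
    {G : Type} [Group G] [Fintype G] (p : ℕ) [Fact p.Prime]
    (hG : Fintype.card G = p) (g : G) (k : ℕ) (hk : 1 ≤ k)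
    (a α : Fin k → G) (β β' : ZMod p) (hββ' : β ≠ β')
    (βi γi βi' γi' : Fin k → ZMod p)
    (hsum : ∑ i, βi i = β) (hsum' : ∑ i, βi' i = β')
    (h1 : ∀ i, g ^ (γi i).val = α i * (a i) ^ (βi i).val)
    (h2 : ∀ i, g ^ (γi' i).val = α i * (a i) ^ (βi' i).val) :
    ∃ i, βi i ≠ βi' i ∧ a i = g ^ ((γi i - γi' i) * (βi i - βi' i)⁻¹).val := by
  have hpow (u : G) : u ^ p = 1 := hG ▸ pow_card_eq_one
  exact cds_knowledge_extraction_general (hpow g) (fun i => hpow (a i))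
    (by rwa [hsum, hsum']) h1 h2
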